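/- arXiv:2601.10531 — 2 statements merged into one kernel-verified Lean document; each statement's English description precedes it below -/
import Mathlib

section
/- Let G = (V,E) be a finite DAG and let 𝓘 be a collection of subsets of V (intervention target sets), with ian_G(v) = an_G(v) ∩ ⋃_{I∈𝓘} I. Then the partition of V into equivalence classes of the relation v ∼ w ⟺ ian_G(v) = ian_G(w) is a valid coarsening partition of G; that is, the quotient graph over these classes, with an edge between distinct classes π → ρ whenever some v ∈ π and w ∈ ρ satisfy v → w ∈ E, is acyclic. -/
/-- The quotient-graph edge relation induced by `E` on the parts of `P`. -/
def QuotRel {V : Type*} (E : V → V → Prop) (P : Set (Set V)) (π ρ : Set V) : Prop :=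
  π ∈ P ∧ ρ ∈ P ∧ π ≠ ρ ∧ ∃ v ∈ π, ∃ w ∈ ρ, E v w

/-- `P` is a valid coarsening partition of the DAG with edges `E`:
a partition of `V` whose quotient graph is acyclic. -/
def ValidCoarsening {V : Type*} (E : V → V → Prop) (P : Set (Set V)) : Prop :=
  Setoid.IsPartition P ∧ ∀ π, ¬ Relation.TransGen (QuotRel E P) π π

/-- `P` refines `Q`: every part of `P` is contained in some part of `Q`. -/
def Refines {V : Type*} (P Q : Set (Set V)) : Prop :=
  ∀ π ∈ P, ∃ ρ ∈ Q, π ⊆ ρ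

/-- The common refinement of two partitions: the nonempty intersections of their parts. -/
def CommonRefinement {V : Type*} (P Q : Set (Set V)) : Set (Set V) :=
  {s | s.Nonempty ∧ ∃ U ∈ P, ∃ W ∈ Q, s = U ∩ W}

/-- The intervened ancestors of `v`: ancestors of `v` (including `v` itself) that belong
to some intervention target set in the collection `𝓘`. -/
def IntervenedAncestors {V : Type*} (E : V → V → Prop) (𝓘 : Set (Set V)) (v : V) : Set V :=
  {u | Relation.ReflTransGen E u v} ∩ ⋃₀ 𝓘

/-!
Intervened-ancestor sets can only grow along an edge, and an edge between distinct classes joins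
vertices with different intervened-ancestor sets, so they strictly grow along every edge of the
quotient graph; a cycle would make such a set a proper subset of itself. The argument works for
the fibres of any function into a partial order that is monotone along edges.
-/

section FibresOfMonotone

variable {V α : Type*} [PartialOrder α] {E : V → V → Prop} {f : V → α}

theorem QuotRel.lt_of_mem_of_mem (hf : ∀ ⦃v w⦄, E v w → f v ≤ f w) {π ρ : Set V}
    (h : QuotRel E (Setoid.ker f).classes π ρ) {v w : V} (hv : v ∈ π) (hw : w ∈ ρ) :
    f v < f w := by
  obtain ⟨hπ, hρ, hne, a, ha, b, hb, hab⟩ := h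
  have hva : f v = f a := (Setoid.rel_iff_exists_classes _).2 ⟨π, hπ, hv, ha⟩
  have hbw : f b = f w := (Setoid.rel_iff_exists_classes _).2 ⟨ρ, hρ, hb, hw⟩
  have hle : f v ≤ f w := calc
    f v = f a := hva
    _ ≤ f b := hf hab
    _ = f w := hbw
  refine hle.lt_of_ne fun hvw : Setoid.ker f v w => hne ?_
  obtain ⟨σ, hσ, hvσ, hwσ⟩ := (Setoid.rel_iff_exists_classes _).1 hvw
  exact (Setoid.eq_of_mem_classes hπ hv hσ hvσ).trans (Setoid.eq_of_mem_classes hσ hwσ hρ hw)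

theorem lt_of_transGen_quotRel (hf : ∀ ⦃v w⦄, E v w → f v ≤ f w) {π ρ : Set V}
    (h : Relation.TransGen (QuotRel E (Setoid.ker f).classes) π ρ) {v w : V}
    (hv : v ∈ π) (hw : w ∈ ρ) : f v < f w := by
  induction h generalizing w with
  | single h => exact h.lt_of_mem_of_mem hf hv hw
  | tail _ h ih =>
    have ⟨_, _, _, u, hu, _⟩ := h
    exact (ih hu).trans (h.lt_of_mem_of_mem hf hu hw)

theorem validCoarsening_classes_ker (hf : ∀ ⦃v w⦄, E v w → f v ≤ f w) :
    ValidCoarsening E (Setoid.ker f).classes := by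
  refine ⟨Setoid.isPartition_classes _, fun π hπ => ?_⟩
  obtain ⟨ρ, ⟨-, -, -, v, hv, -⟩, -⟩ := Relation.TransGen.head'_iff.1 hπ
  exact (lt_of_transGen_quotRel hf hπ hv hv).false

end FibresOfMonotone

theorem intervenedAncestors_subset_of_reflTransGen {V : Type*} {E : V → V → Prop}
    (𝓘 : Set (Set V)) {v w : V} (h : Relation.ReflTransGen E v w) :
    IntervenedAncestors E 𝓘 v ⊆ IntervenedAncestors E 𝓘 w :=
  Set.inter_subset_inter_left _ fun _ hu => hu.trans h

theorem interventionalCoarsening_valid_general {V : Type*} (E : V → V → Prop)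
    (𝓘 : Set (Set V)) :
    ValidCoarsening E
      {s : Set V | ∃ v : V,
        s = {w : V | IntervenedAncestors E 𝓘 w = IntervenedAncestors E 𝓘 v}} :=
  validCoarsening_classes_ker fun _ _ h =>
    intervenedAncestors_subset_of_reflTransGen 𝓘 (.single h)

/-- the partition of `V` into equivalence classes of
`v ∼ w ↔ ian_G(v) = ian_G(w)` is a valid coarsening partition of the finite DAG `G`:
it is a partition and its quotient graph is acyclic. -/
theorem interventionalCoarsening_valid
    {V : Type*} [Fintype V] (E : V → V → Prop)
    (hacyc : ∀ v, ¬ Relation.TransGen E v v)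
    (𝓘 : Set (Set V)) :
    ValidCoarsening E
      {s : Set V | ∃ v : V,
        s = {w : V | IntervenedAncestors E 𝓘 w = IntervenedAncestors E 𝓘 v}} :=
  interventionalCoarsening_valid_general E 𝓘
end

section
/- Let G = (V,E) be a finite DAG with a coarsening G' = (V',E') given by surjection χ : V → V'. Let (X_v)_{v∈V} be random variables on a common probability space taking values in standard Borel spaces, and suppose the joint law is globally Markov to G, i.e., for all pairwise disjoint sets A, B, C ⊆ V such that A and B are d-separated given C in G, the random vectors X_A and X_B are conditionally independent given X_C. Then the joint law is globally Markov to G' with respect to the coarse variables: for all pairwise disjoint A', B', C' ⊆ V' such that A' and B' are d-separated given C' in G', the random vectors X_{χ⁻¹(A')} and X_{χ⁻¹(B')} are conditionally independent given X_{χ⁻¹(C')}. -/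
open MeasureTheory

/-- There exists an active path (relative to the conditioning set `C`) between `a` and `b`
in the graph with directed-edge relation `E`. -/
def ActiveBetween {V : Type*} (E : V → V → Prop) (C : Set V) (a b : V) : Prop :=
  a ∉ C ∧ b ∉ C ∧
  ∃ p : List V,
    2 ≤ p.length ∧ p.Nodup ∧
    p.head? = some a ∧ p.getLast? = some b ∧
    (∀ i, ∀ h : i + 1 < p.length,
      E (p[i]'(by omega)) (p[i + 1]'h) ∨ E (p[i + 1]'h) (p[i]'(by omega))) ∧
    (∀ i, ∀ h : i + 2 < p.length,
      ((E (p[i]'(by omega)) (p[i + 1]'(by omega)) ∧ E (p[i + 2]'h) (p[i + 1]'(by omega))) →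
        ∃ c ∈ C, Relation.ReflTransGen E (p[i + 1]'(by omega)) c) ∧
      (¬ (E (p[i]'(by omega)) (p[i + 1]'(by omega)) ∧ E (p[i + 2]'h) (p[i + 1]'(by omega))) →
        p[i + 1]'(by omega) ∉ C))

/-- `A` and `B` are d-separated given `C`. -/
def DSep {V : Type*} (E : V → V → Prop) (C A B : Set V) : Prop :=
  ∀ a ∈ A, ∀ b ∈ B, ¬ ActiveBetween E C a b

/-- `f` and `g` are conditionally independent given `h` (under the measure `μ`): for all
measurable sets `s, t` in the respective codomains, the conditional expectation (given the
σ-algebra generated by `h`) of the indicator of `f ⁻¹' s ∩ g ⁻¹' t` agrees a.e. with the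
product of the conditional expectations of the indicators of `f ⁻¹' s` and `g ⁻¹' t`. -/
def CondIndepGiven {Ω β γ δ : Type*} [MeasurableSpace Ω] [MeasurableSpace β]
    [MeasurableSpace γ] [MeasurableSpace δ]
    (μ : Measure Ω) (f : Ω → β) (g : Ω → γ) (h : Ω → δ) : Prop :=
  ∀ (s : Set β) (t : Set γ), MeasurableSet s → MeasurableSet t →
    μ[(f ⁻¹' s ∩ g ⁻¹' t).indicator (fun _ => (1 : ℝ)) |
        MeasurableSpace.comap h inferInstance]
      =ᵐ[μ]
    μ[(f ⁻¹' s).indicator (fun _ => (1 : ℝ)) | MeasurableSpace.comap h inferInstance] *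
    μ[(g ⁻¹' t).indicator (fun _ => (1 : ℝ)) | MeasurableSpace.comap h inferInstance]

/-!
Activity of a path is a local condition at its interior nodes, so it makes sense for walks with
repeated nodes. The image of an active walk under a coarsening, with consecutive repetitions merged,
is active: a stretch of the walk inside a fibre contains a collider if it is entered and left along
edges pointing into the fibre, and a non-collider otherwise. Erasing a loop `w, x, …, w` before an
edge `z → w` from an active walk leaves it active: follow the loop backwards from its end. Either
this gives a directed path from `w` to a collider, or the loop is a directed cycle, so that `x → w`
enters `w` just as `z → w` does. Hence active paths in `G` give active paths in `G'`, and
d-separation in `G'` pulls back to d-separation in `G`.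
-/

section

variable {V : Type*} {E : V → V → Prop} {C : Set V} {a b v w x z : V} {l r : List V}

/-- The ancestors of `C` in the graph `E`, members of `C` included: the nodes at which a collider
is active relative to `C`. -/
def ancestors (E : V → V → Prop) (C : Set V) : Set V :=
  {v | ∃ c ∈ C, Relation.ReflTransGen E v c}

/-- The local activity condition at an interior node `v` of a walk. The propositions `into₁` and
`into₂` say that the two adjacent edges of the walk point into `v`. -/
def ActiveAt (E : V → V → Prop) (C : Set V) (v : V) (into₁ into₂ : Prop) : Prop :=
  (into₁ ∧ into₂ → v ∈ ancestors E C) ∧ (¬(into₁ ∧ into₂) → v ∉ C)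

/-- The walk `v :: l` remains active at `v` when it is extended at the front by an edge, which
points into `v` if and only if `into` holds. -/
def ActiveEntry (E : V → V → Prop) (C : Set V) (into : Prop) (v : V) (l : List V) : Prop :=
  ∀ y ∈ l.head?, ActiveAt E C v into (E y v)

/-- Active walks relative to `C` from `a` to `b`, with possibly repeated nodes. The list consists of
the nodes after `a`. -/
inductive ActiveWalk (E : V → V → Prop) (C : Set V) (b : V) : V → List V → Prop
  | nil : ActiveWalk E C b b []
  | cons {v x : V} {l : List V} (adj : E v x ∨ E x v) (entry : ActiveEntry E C (E v x) x l)
      (walk : ActiveWalk E C b x l) : ActiveWalk E C b v (x :: l)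

/-- The global Markov property with respect to the graph `E` of an abstract ternary relation
`I A B C`, to be read as `A` being independent of `B` given `C`. -/
def GlobalMarkov (E : V → V → Prop) (I : Set V → Set V → Set V → Prop) : Prop :=
  ∀ A B C : Set V, Disjoint A B → Disjoint A C → Disjoint B C → DSep E C A B → I A B C

theorem mem_ancestors_of_reflTransGen (hvw : Relation.ReflTransGen E v w)
    (hw : w ∈ ancestors E C) : v ∈ ancestors E C :=
  let ⟨c, hc, hwc⟩ := hw
  ⟨c, hc, hvw.trans hwc⟩

/-- Merges two adjacent nodes with the same image `v`: the edge between them points into the first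
node if `back` holds and into the second if `forth` holds. -/
theorem ActiveAt.merge {into₁ into₂ forth back : Prop} (adj : forth ∨ back)
    (h₁ : ActiveAt E C v into₁ back) (h₂ : ActiveAt E C v forth into₂) :
    ActiveAt E C v into₁ into₂ := by
  refine ⟨fun ⟨hinto₁, hinto₂⟩ => ?_, fun hnot hv => ?_⟩
  · rcases adj with hforth | hback
    · exact h₂.1 ⟨hforth, hinto₂⟩
    · exact h₁.1 ⟨hinto₁, hback⟩
  · have hinto₁ : into₁ := by_contra fun hn => h₁.2 (fun h => hn h.1) hv
    have hinto₂ : into₂ := by_contra fun hn => h₂.2 (fun h => hn h.2) hv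
    exact hnot ⟨hinto₁, hinto₂⟩

@[simp]
theorem activeEntry_nil {into : Prop} : ActiveEntry E C into v [] := by
  simp [ActiveEntry]

@[simp]
theorem activeEntry_cons {into : Prop} :
    ActiveEntry E C into v (x :: l) ↔ ActiveAt E C v into (E x v) := by
  simp [ActiveEntry]

namespace ActiveWalk

@[simp]
theorem nil_iff : ActiveWalk E C b a [] ↔ a = b :=
  ⟨fun h => by cases h; rfl, fun h => h ▸ nil⟩

@[simp]
theorem cons_iff : ActiveWalk E C b a (x :: l) ↔
    (E a x ∨ E x a) ∧ ActiveEntry E C (E a x) x l ∧ ActiveWalk E C b x l :=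
  ⟨fun | cons adj entry walk => ⟨adj, entry, walk⟩, fun ⟨adj, entry, walk⟩ => cons adj entry walk⟩

theorem iff_getElem : ActiveWalk E C b a l ↔
    (a :: l).getLast? = some b ∧
    (∀ i, ∀ h : i + 1 < (a :: l).length,
      E (a :: l)[i] (a :: l)[i + 1] ∨ E (a :: l)[i + 1] (a :: l)[i]) ∧
    ∀ i, ∀ h : i + 2 < (a :: l).length,
      ActiveAt E C (a :: l)[i + 1] (E (a :: l)[i] (a :: l)[i + 1])
        (E (a :: l)[i + 2] (a :: l)[i + 1]) := by
  induction l generalizing a with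
  | nil => simp
  | cons x l ih =>
    rw [cons_iff, ih, List.getLast?_cons_cons]
    constructor
    · rintro ⟨adj, entry, last, adjs, active⟩
      refine ⟨last, fun i h => ?_, fun i h => ?_⟩
      · cases i with
        | zero => exact adj
        | succ i => exact adjs i (by simpa using h)
      · cases i with
        | zero =>
          cases l with
          | nil => simp at h
          | cons y l => exact activeEntry_cons.1 entry
        | succ i => exact active i (by simpa using h)
    · rintro ⟨last, adjs, active⟩
      refine ⟨adjs 0 (by simp), ?_, last, fun i h => adjs (i + 1) (by simpa using h),
        fun i h => active (i + 1) (by simpa using h)⟩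
      cases l with
      | nil => exact activeEntry_nil
      | cons y l => exact activeEntry_cons.2 (active 0 (by simp))

theorem of_suffix (h : ActiveWalk E C b v l) (hr : w :: r <:+ v :: l) :
    ActiveWalk E C b w r := by
  induction h with
  | nil => simp_all [List.suffix_cons_iff]
  | cons adj entry walk ih =>
    rcases List.suffix_cons_iff.1 hr with heq | hr
    · cases heq
      exact cons adj entry walk
    · exact ih hr

theorem edge_of_mem_of_suffix (h : ActiveWalk E C b v l) (hr : w :: z :: r <:+ l) (hw : w ∈ C) :
    E z w := by
  induction h with
  | nil => simp at hr
  | cons _ entry _ ih =>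
    rcases List.suffix_cons_iff.1 hr with heq | hr
    · cases heq
      by_contra hzw
      exact (activeEntry_cons.1 entry).2 (fun hinto => hzw hinto.2) hw
    · exact ih hr

theorem mem_ancestors_or_reflTransGen_of_suffix (h : ActiveWalk E C b v l)
    (hr : w :: z :: r <:+ v :: l) (hzw : E z w) :
    w ∈ ancestors E C ∨ Relation.ReflTransGen E w v ∧ ∃ y ∈ l.head?, E y v := by
  induction h with
  | nil => simp [List.suffix_cons_iff] at hr
  | @cons v x l adj entry _ ih =>
    rcases List.suffix_cons_iff.1 hr with heq | hr
    · cases heq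
      exact .inr ⟨.refl, z, rfl, hzw⟩
    · obtain hw | ⟨hwx, y, hy, hyx⟩ := ih hr
      · exact .inl hw
      · by_cases hvx : E v x
        · exact .inl (mem_ancestors_of_reflTransGen hwx ((entry y hy).1 ⟨hvx, hyx⟩))
        · have hxv : E x v := adj.resolve_left hvx
          exact .inr ⟨hwx.tail hxv, x, rfl, hxv⟩

theorem activeEntry_of_loop {into : Prop} (h : ActiveWalk E C b w (x :: l))
    (hr : w :: r <:+ x :: l) (entry : ActiveAt E C w into (E x w)) :
    ActiveEntry E C into w r := by
  cases r with
  | nil => exact activeEntry_nil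
  | cons z r =>
    refine activeEntry_cons.2 ⟨fun ⟨hinto, hzw⟩ => ?_, fun hnot hw => ?_⟩
    · obtain hw | ⟨_, y, hy, hyw⟩ :=
        h.mem_ancestors_or_reflTransGen_of_suffix (hr.trans (List.suffix_cons w _)) hzw
      · exact hw
      · exact entry.1 ⟨hinto, Option.some.inj hy ▸ hyw⟩
    · have hzw : E z w := h.edge_of_mem_of_suffix hr hw
      exact entry.2 (fun hboth => hnot ⟨hboth.1, hzw⟩) hw

theorem exists_nodup (h : ActiveWalk E C b a l) :
    ∃ p, ActiveWalk E C b a p ∧ (a :: p).Nodup ∧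
      ∀ into, ActiveEntry E C into a l → ActiveEntry E C into a p := by
  induction h with
  | nil => exact ⟨[], nil, List.nodup_singleton b, fun _ => id⟩
  | @cons w x l adj entry _ ih =>
    obtain ⟨p, hp, hnodup, hentry⟩ := ih
    have hwp : ActiveWalk E C b w (x :: p) := cons adj (hentry _ entry) hp
    by_cases hw : w ∈ x :: p
    · obtain ⟨s, r, hsr⟩ := List.append_of_mem hw
      have hr : w :: r <:+ x :: p := ⟨s, hsr.symm⟩
      exact ⟨r, hp.of_suffix hr, hnodup.sublist hr.sublist,
        fun _ hl => hwp.activeEntry_of_loop hr (activeEntry_cons.1 hl)⟩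
    · exact ⟨x :: p, hwp, List.nodup_cons.2 ⟨hw, hnodup⟩,
        fun _ hl => activeEntry_cons.2 (activeEntry_cons.1 hl)⟩

end ActiveWalk

theorem activeBetween_iff_exists_activeWalk : ActiveBetween E C a b ↔
    a ∉ C ∧ b ∉ C ∧ a ≠ b ∧ ∃ l, ActiveWalk E C b a l := by
  refine and_congr_right fun _ => and_congr_right fun _ => ⟨?_, ?_⟩
  · rintro ⟨p, hlen, hnodup, hhead, hlast, adjs, active⟩
    obtain ⟨l, rfl⟩ := List.head?_eq_some_iff.1 hhead
    refine ⟨?_, l, ActiveWalk.iff_getElem.2 ⟨hlast, adjs, active⟩⟩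
    rintro rfl
    grind
  · rintro ⟨hab, l, hl⟩
    obtain ⟨p, hp, hnodup, _⟩ := hl.exists_nodup
    obtain ⟨hlast, adjs, active⟩ := ActiveWalk.iff_getElem.1 hp
    refine ⟨a :: p, ?_, hnodup, rfl, hlast, adjs, active⟩
    cases hp with
    | nil => exact absurd rfl hab
    | cons => simp

end

section Coarsening

variable {V V' : Type*} {E : V → V → Prop} {E' : V' → V' → Prop} {χ : V → V'} {C' : Set V'}

/-- A weak homomorphism of directed graphs: every edge is either mapped to an edge or contracted.
The map of a graph onto a coarsening is one. -/
def IsWeakHom (E : V → V → Prop) (E' : V' → V' → Prop) (χ : V → V') : Prop :=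
  ∀ v w, E v w → χ v ≠ χ w → E' (χ v) (χ w)

theorem IsWeakHom.map_mem_ancestors (hχ : IsWeakHom E E' χ) {v : V}
    (hv : v ∈ ancestors E (χ ⁻¹' C')) : χ v ∈ ancestors E' C' := by
  obtain ⟨c, hc, hvc⟩ := hv
  refine ⟨χ c, hc, hvc.lift' χ fun u w huw => ?_⟩
  by_cases heq : χ u = χ w
  · rw [Function.onFun, heq]
  · exact .single (hχ u w huw heq)

theorem IsWeakHom.map_edge_iff [Std.Asymm E'] (hχ : IsWeakHom E E' χ) {v w : V}
    (adj : E v w ∨ E w v) (hne : χ v ≠ χ w) : E' (χ v) (χ w) ↔ E v w :=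
  ⟨fun h => adj.resolve_right fun hwv => Std.Asymm.asymm _ _ h (hχ w v hwv hne.symm),
    fun h => hχ v w h hne⟩

theorem ActiveAt.map (hχ : IsWeakHom E E' χ) {v : V} {into₁ into₂ : Prop}
    (h : ActiveAt E (χ ⁻¹' C') v into₁ into₂) : ActiveAt E' C' (χ v) into₁ into₂ :=
  ⟨fun hinto => hχ.map_mem_ancestors (h.1 hinto), h.2⟩

theorem ActiveWalk.exists_map [Std.Asymm E'] (hχ : IsWeakHom E E' χ) {a b : V} {l : List V}
    (h : ActiveWalk E (χ ⁻¹' C') b a l) :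
    ∃ p, ActiveWalk E' C' (χ b) (χ a) p ∧
      ∀ into, ActiveEntry E (χ ⁻¹' C') into a l → ActiveEntry E' C' into (χ a) p := by
  induction h with
  | nil => exact ⟨[], nil, fun _ _ => activeEntry_nil⟩
  | @cons v x l adj entry _ ih =>
    obtain ⟨p, hp, hentry⟩ := ih
    have entry' := hentry _ entry
    by_cases heq : χ v = χ x
    · refine ⟨p, heq ▸ hp, fun into hl y hy => ?_⟩
      have hv := (activeEntry_cons.1 hl).map hχ
      rw [heq] at hv ⊢
      exact hv.merge adj (entry' y hy)
    · refine ⟨χ x :: p, cons (adj.imp (hχ v x · heq) (hχ x v · (Ne.symm heq))) ?_ hp,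
        fun into hl => ?_⟩
      · rwa [hχ.map_edge_iff adj heq]
      · rw [activeEntry_cons, hχ.map_edge_iff adj.symm (Ne.symm heq)]
        exact (activeEntry_cons.1 hl).map hχ

theorem DSep.preimage [Std.Asymm E'] (hχ : IsWeakHom E E' χ) {A' B' : Set V'}
    (hAB : Disjoint A' B') (h : DSep E' C' A' B') :
    DSep E (χ ⁻¹' C') (χ ⁻¹' A') (χ ⁻¹' B') := by
  intro a ha b hb hab
  obtain ⟨haC, hbC, _, l, hl⟩ := activeBetween_iff_exists_activeWalk.1 hab
  obtain ⟨p, hp, _⟩ := hl.exists_map hχ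
  exact h (χ a) ha (χ b) hb
    (activeBetween_iff_exists_activeWalk.2 ⟨haC, hbC, hAB.ne_of_mem ha hb, p, hp⟩)

theorem coarsening_global_markov_general [Std.Asymm E'] (hχ : IsWeakHom E E' χ)
    {I : Set V → Set V → Set V → Prop} (hI : GlobalMarkov E I) :
    GlobalMarkov E' fun A' B' C' => I (χ ⁻¹' A') (χ ⁻¹' B') (χ ⁻¹' C') :=
  fun _ _ _ hAB hAC hBC hsep =>
    hI _ _ _ (hAB.preimage χ) (hAC.preimage χ) (hBC.preimage χ) (hsep.preimage hχ hAB)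

end Coarsening

/-- if the joint law of random variables `(X_v)_{v ∈ V}`, taking values in
standard Borel spaces, is globally Markov to a finite DAG `G`, then it is globally Markov
to any coarsening `G'` of `G` with respect to the coarse variables `X_{χ⁻¹(·)}`. -/
theorem coarsening_global_markov
    {V V' : Type*} [Fintype V] [Fintype V']
    (E : V → V → Prop) (E' : V' → V' → Prop)
    (hacyc : ∀ v, ¬ Relation.TransGen E v v)
    (hacyc' : ∀ x, ¬ Relation.TransGen E' x x)
    (χ : V → V') (hχ : Function.Surjective χ)
    (hE' : ∀ x y, E' x y ↔ ∃ v w, E v w ∧ χ v ≠ χ w ∧ χ v = x ∧ χ w = y)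
    {Ω : Type*} [MeasurableSpace Ω] (μ : Measure Ω) [IsProbabilityMeasure μ]
    (S : V → Type*) [∀ v, MeasurableSpace (S v)] [∀ v, StandardBorelSpace (S v)]
    (X : ∀ v, Ω → S v) (hX : ∀ v, Measurable (X v))
    (hMarkov : ∀ A B C : Set V,
      Disjoint A B → Disjoint A C → Disjoint B C → DSep E C A B →
      CondIndepGiven μ (fun ω => fun v : A => X v ω) (fun ω => fun v : B => X v ω)
        (fun ω => fun v : C => X v ω)) :
    ∀ A' B' C' : Set V',
      Disjoint A' B' → Disjoint A' C' → Disjoint B' C' → DSep E' C' A' B' →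
      CondIndepGiven μ
        (fun ω => fun v : (χ ⁻¹' A' : Set V) => X v ω)
        (fun ω => fun v : (χ ⁻¹' B' : Set V) => X v ω)
        (fun ω => fun v : (χ ⁻¹' C' : Set V) => X v ω) := by
  have : Std.Asymm E' := ⟨fun x _ hxy hyx => hacyc' x (.tail (.single hxy) hyx)⟩
  exact coarsening_global_markov_general
    (fun v w hvw hne => (hE' _ _).2 ⟨v, w, hvw, hne, rfl, rfl⟩) hMarkov
end
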